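/- arXiv:1604.05267 — 2 statements merged into one kernel-verified Lean document; each statement's English description precedes it below -/
import Mathlib

section
/- Let f : (0,∞) → (0,∞) be smooth and u > 0. Then for every integer N ≥ 0, as w ↓ 2 one has the expansion Δ_u(f)(w) = ∑_{j=0}^{N} c_j (w−2)^j + O((w−2)^{N+1}), where c_j = (1/(2j+1)!) · d^j/du^j ( u^{2j+1} ψ_f^{(j+1)}(u) ). In particular the k-th right derivative of Δ_u(f) at w = 2 equals (k!/(2k+1)!) · d^k/du^k ( u^{2k+1} ψ_f^{(k+1)}(u) ). -/
open Set MeasureTheory Filter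

noncomputable def Pk (k : ℕ) (x : ℝ) : ℝ :=
  ∑ n ∈ Finset.range (k + 1), ((2 * k).choose (n + k) : ℝ) * (-x) ^ n

noncomputable def Pkhat (k : ℕ) (x : ℝ) : ℝ :=
  Pk k x - ((2 * k).choose k : ℝ)

/-- The kernel `Φ_k(x,t)`. -/
noncomputable def Phi (k : ℕ) (x t : ℝ) : ℝ :=
  x⁻¹ * (if t ≤ x then Pk k (t / x) else -Pkhat k (x / t))

/-- The function `ψ_k`. -/
noncomputable def psiK (k : ℕ) (y : ℝ) : ℝ :=
  if 1 ≤ y then Pk k y⁻¹ else -Pkhat k y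

/-- `f` is a `k`-Stieltjes function on `(0,∞)` (for `k ≥ 2`). -/
def IsStieltjesK (k : ℕ) (f : ℝ → ℝ) : Prop :=
  (∀ x > 0, 0 ≤ f x) ∧
  ContDiffOn ℝ (2 * k - 3 : ℕ) f (Ioi 0) ∧
  (∀ n, 1 ≤ n → n ≤ k - 1 → ∀ x > 0,
    0 ≤ (-1 : ℝ) ^ (n - 1) * iteratedDeriv (2 * n - 1) (fun y => y ^ n * f y) x) ∧
  ConvexOn ℝ (Ioi 0)
    (fun x => (-1 : ℝ) ^ (k - 1) * iteratedDeriv (2 * k - 3) (fun y => y ^ k * f y) x)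

/-- `g` is `k`-monotone on the open interval `I`. -/
def KMonotoneOn (k : ℕ) (g : ℝ → ℝ) (I : Set ℝ) : Prop :=
  if k = 1 then (∀ x ∈ I, 0 ≤ g x) ∧ AntitoneOn g I
  else
    ContDiffOn ℝ (k - 2 : ℕ) g I ∧
    ∀ n ≤ k - 2,
      (∀ x ∈ I, 0 ≤ (-1 : ℝ) ^ n * iteratedDeriv n g x) ∧
      AntitoneOn (fun x => (-1 : ℝ) ^ n * iteratedDeriv n g x) I ∧
      ConvexOn ℝ I (fun x => (-1 : ℝ) ^ n * iteratedDeriv n g x)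

/-- `v(w) = (w + √(w²−4))/2`. -/
noncomputable def vOf (w : ℝ) : ℝ := (w + Real.sqrt (w ^ 2 - 4)) / 2

/-- `F_u(w) = f(uv) f(u/v)`. -/
noncomputable def Fu (f : ℝ → ℝ) (u w : ℝ) : ℝ := f (u * vOf w) * f (u / vOf w)

/-- `f` is `k`-hyperbolically monotone. -/
def IsHMk (k : ℕ) (f : ℝ → ℝ) : Prop :=
  (∀ x > 0, 0 ≤ f x) ∧ ∀ u > 0, KMonotoneOn k (Fu f u) (Ioi 2)

/-- `f` is power regular `k`-hyperbolically monotone. -/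
def IsPRHMk (k : ℕ) (f : ℝ → ℝ) : Prop :=
  ∀ p > 0, IsHMk k (fun x => f x ^ p)

/-- `ψ_f(x) = -x (log f)'(x)`. -/
noncomputable def psiF (f : ℝ → ℝ) (x : ℝ) : ℝ := -x * deriv (fun y => Real.log (f y)) x

/-- `Δ_u(f)`. -/
noncomputable def DeltaU (f : ℝ → ℝ) (u w : ℝ) : ℝ :=
  (psiF f (u * vOf w) - psiF f (u / vOf w)) / (vOf w - (vOf w)⁻¹)

/-- `Δ_{k,u}`. -/
noncomputable def DeltaKU (k : ℕ) (u w : ℝ) : ℝ :=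
  (psiK k (u * vOf w) - psiK k (u / vOf w)) / (vOf w - (vOf w)⁻¹)



noncomputable def Hn (u : ℝ) (n : ℕ) (φ : ℝ → ℝ) (w : ℝ) : ℝ :=
  ∫ t in (-1:ℝ)..1, (1 - t^2)^n * φ (u * w / 2 + t * (u / 2 * Real.sqrt (w^2 - 4)))

lemma Hn_cont (u : ℝ) (n : ℕ) (φ : ℝ → ℝ) (h : Continuous φ) : Continuous (Hn u n φ) := by
  unfold Hn
  apply intervalIntegral.continuous_parametric_intervalIntegral_of_continuous'
  simp only [Function.uncurry_def]
  fun_prop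

lemma Hn_hasDerivAt (u : ℝ) (n : ℕ) (φ : ℝ → ℝ) (h : ContDiff ℝ (⊤ : ℕ∞) φ) (w : ℝ) (hw : 2 < w) :
    HasDerivAt (Hn u n φ) (u / 2 * Hn u n (deriv φ) w +
      u^2 / (8 * (n+1)) * (w * Hn u (n+1) (deriv (deriv φ)) w)) w := by
  have hφ1 : ContDiff ℝ (⊤ : ℕ∞) (deriv φ) := by
    exact (contDiff_infty_iff_deriv.1 h).2
  have hφ2 : ContDiff ℝ (⊤ : ℕ∞) (deriv (deriv φ)) := (contDiff_infty_iff_deriv.1 hφ1).2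
  have hc0 := h.continuous
  have hc1 := hφ1.continuous
  have hc2 := hφ2.continuous
  have hd0 : ∀ x, HasDerivAt φ (deriv φ x) x := fun x =>
    ((h.differentiable (by simp)) x).hasDerivAt
  have hd1 : ∀ x, HasDerivAt (deriv φ) (deriv (deriv φ) x) x := fun x =>
    ((hφ1.differentiable (by simp)) x).hasDerivAt
  set F' : ℝ → ℝ → ℝ := fun x t => (1 - t^2)^n *
    (deriv φ (u * x / 2 + t * (u / 2 * Real.sqrt (x^2 - 4))) *
      (u / 2 + t * (u / 2 * (x / Real.sqrt (x^2-4))))) with hF'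
  have hsq : ∀ x : ℝ, 2 < x → 0 < Real.sqrt (x^2 - 4) := fun x hx => 
    Real.sqrt_pos.2 (by nlinarith)
  have hder : ∀ x : ℝ, 2 < x → ∀ t, HasDerivAt (fun x => (1 - t^2)^n * φ (u * x / 2 + t * (u / 2 * Real.sqrt (x^2 - 4)))) (F' x t) x := by
    intro x hx t
    have h1 : HasDerivAt (fun x : ℝ => x^2 - 4) (2 * x) x := by
      simpa using (hasDerivAt_pow 2 x).sub_const 4
    have h2 := h1.sqrt (by nlinarith : x^2 - 4 ≠ 0)
    have h3 : HasDerivAt (fun x => u * x / 2 + t * (u / 2 * Real.sqrt (x^2 - 4)))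
       (u / 2 + t * (u / 2 * (x / Real.sqrt (x^2-4)))) x := by
      have := (((hasDerivAt_id x).const_mul u).div_const 2).add ((h2.const_mul (u/2)).const_mul t)
      refine this.congr_deriv ?_
      have := (hsq x hx).ne'
      field_simp
    exact ((hd0 _).comp x h3).const_mul _
  obtain ⟨C, hC⟩ : ∃ C, ∀ p ∈ (Icc ((w+2)/2) (w+1)) ×ˢ (Icc (-1:ℝ) 1), ‖F' p.1 p.2‖ ≤ C := by
    apply IsCompact.exists_bound_of_continuousOn (isCompact_Icc.prod isCompact_Icc)
    have : ∀ p ∈ (Icc ((w+2)/2) (w+1)) ×ˢ (Icc (-1:ℝ) 1), Real.sqrt (p.1^2-4) ≠ 0 := by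
      rintro p ⟨hp, -⟩
      exact (hsq _ (by linarith [hp.1])).ne'
    simp only [hF']
    fun_prop (disch := assumption)
  have key := intervalIntegral.hasDerivAt_integral_of_dominated_loc_of_deriv_le (μ := volume)
    (F := fun x t => (1 - t^2)^n * φ (u * x / 2 + t * (u / 2 * Real.sqrt (x^2 - 4))))
    (F' := F') (x₀ := w) (s := Ioo ((w+2)/2) (w+1)) (a := -1) (b := 1) (bound := fun _ => C)
    (Ioo_mem_nhds (by linarith) (by linarith))
    (Eventually.of_forall fun x => (Continuous.aestronglyMeasurable (by fun_prop)))
    (Continuous.intervalIntegrable (by fun_prop) _ _)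
    (Continuous.aestronglyMeasurable (by simp only [hF']; fun_prop))
    (by
      refine Eventually.of_forall fun t ht x hx => hC (x, t) ⟨Ioo_subset_Icc_self hx, ?_⟩
      rw [uIoc_of_le (by norm_num)] at ht
      exact Ioc_subset_Icc_self ht)
    (by simp)
    (Eventually.of_forall fun t ht x hx => hder x (by linarith [hx.1]) t)
  have h2 := key.2
  refine HasDerivAt.congr_deriv (f := Hn u n φ) h2 ?_
  set r := Real.sqrt (w^2 - 4) with hr
  have hr0 : 0 < r := hsq w hw
  have ibp : ∫ t in (-1:ℝ)..1, (t * (1-t^2)^n) * deriv φ (u * w / 2 + t * (u / 2 * r))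
     = u * r / (4 * (n+1)) * Hn u (n+1) (deriv (deriv φ)) w := by
    have hU : ∀ t : ℝ, HasDerivAt (fun t : ℝ => - (1 - t^2)^(n+1) / (2 * (n+1))) (t * (1-t^2)^n) t := by
      intro t
      have h1 : HasDerivAt (fun t : ℝ => 1 - t^2) (-(2 * t)) t := by
        simpa using (hasDerivAt_pow 2 t).const_sub 1
      have := (h1.pow (n+1)).neg.div_const (2 * ((n:ℝ)+1))
      refine this.congr_deriv ?_
      push_cast
      field_simp
    have hV : ∀ t : ℝ, HasDerivAt (fun t : ℝ => deriv φ (u * w / 2 + t * (u / 2 * r)))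
        (deriv (deriv φ) (u * w / 2 + t * (u / 2 * r)) * (u / 2 * r)) t := by
      intro t
      have h1 : HasDerivAt (fun t : ℝ => u * w / 2 + t * (u / 2 * r)) (u / 2 * r) t := by
        simpa using ((hasDerivAt_id t).mul_const (u / 2 * r)).const_add (u * w / 2)
      exact (hd1 _).comp t h1
    have := intervalIntegral.integral_deriv_mul_eq_sub (a := -1) (b := 1)
      (u := fun t : ℝ => - (1 - t^2)^(n+1) / (2 * ((n:ℝ)+1))) (u' := fun t => t * (1-t^2)^n)
      (v := fun t : ℝ => deriv φ (u * w / 2 + t * (u / 2 * r)))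
      (v' := fun t => deriv (deriv φ) (u * w / 2 + t * (u / 2 * r)) * (u / 2 * r))
      (fun t _ => hU t) (fun t _ => hV t)
      (Continuous.intervalIntegrable (by fun_prop) _ _)
      (Continuous.intervalIntegrable (by fun_prop) _ _)
    rw [intervalIntegral.integral_add (Continuous.intervalIntegrable (by fun_prop) _ _)
      (Continuous.intervalIntegrable (by fun_prop) _ _)] at this
    simp at this
    rw [eq_neg_of_add_eq_zero_left this, Hn, ← intervalIntegral.integral_const_mul,
      ← intervalIntegral.integral_neg]
    apply intervalIntegral.integral_congr
    intro t _
    simp only [← hr]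
    field_simp
    ring
  have : ∫ t in (-1:ℝ)..1, F' w t = u / 2 * Hn u n (deriv φ) w + (u / 2 * (w / r)) * 
     ∫ t in (-1:ℝ)..1, (t * (1-t^2)^n) * deriv φ (u * w / 2 + t * (u / 2 * r)) := by
    rw [Hn, ← intervalIntegral.integral_const_mul, ← intervalIntegral.integral_const_mul,
      ← intervalIntegral.integral_add (Continuous.intervalIntegrable (by fun_prop) _ _)
      (Continuous.intervalIntegrable (by fun_prop) _ _)]
    apply intervalIntegral.integral_congr
    intro t _
    simp only [hF', ← hr]
    ring
  rw [this, ibp]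
  field_simp
  ring

lemma Hn_hasDerivWithinAt (u : ℝ) (n : ℕ) (φ : ℝ → ℝ) (h : ContDiff ℝ (⊤ : ℕ∞) φ) (w : ℝ) (hw : w ∈ Ici (2:ℝ)) :
    HasDerivWithinAt (Hn u n φ) (u / 2 * Hn u n (deriv φ) w +
      u^2 / (8 * (n+1)) * (w * Hn u (n+1) (deriv (deriv φ)) w)) (Ici 2) w := by
  have hφ1 : ContDiff ℝ (⊤ : ℕ∞) (deriv φ) := (contDiff_infty_iff_deriv.1 h).2
  have hφ2 : ContDiff ℝ (⊤ : ℕ∞) (deriv (deriv φ)) := (contDiff_infty_iff_deriv.1 hφ1).2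
  rcases eq_or_lt_of_le (show (2:ℝ) ≤ w from hw) with rfl | hw
  · have c1 := Hn_cont u n _ h.continuous
    have c2 := Hn_cont u n _ hφ1.continuous
    have c3 := Hn_cont u (n+1) _ hφ2.continuous
    apply hasDerivWithinAt_Ici_of_tendsto_deriv (s := Ioi 2)
    · exact fun x hx => (Hn_hasDerivAt u n φ h x hx).differentiableAt.differentiableWithinAt
    · exact c1.continuousWithinAt
    · exact self_mem_nhdsWithin
    · have : Continuous (fun w => u / 2 * Hn u n (deriv φ) w +
        u^2 / (8 * (n+1)) * (w * Hn u (n+1) (deriv (deriv φ)) w)) := by fun_prop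
      refine ((this.tendsto 2).mono_left nhdsWithin_le_nhds).congr' ?_
      filter_upwards [self_mem_nhdsWithin] with x hx
      exact (Hn_hasDerivAt u n φ h x hx).deriv.symm
  · exact (Hn_hasDerivAt u n φ h w hw).hasDerivWithinAt

lemma Hn_contDiffOn (u : ℝ) (k : ℕ) : ∀ (n : ℕ) (φ : ℝ → ℝ) (_ : ContDiff ℝ (⊤ : ℕ∞) φ),
    ContDiffOn ℝ k (Hn u n φ) (Ici 2) := by
  induction k with
  | zero => 
    intro n φ h
    simpa using (Hn_cont u n φ h.continuous).continuousOn
  | succ k ih =>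
    intro n φ h
    have hφ1 : ContDiff ℝ (⊤ : ℕ∞) (deriv φ) := (contDiff_infty_iff_deriv.1 h).2
    have hφ2 : ContDiff ℝ (⊤ : ℕ∞) (deriv (deriv φ)) := (contDiff_infty_iff_deriv.1 hφ1).2
    push_cast
    rw [contDiffOn_succ_iff_derivWithin (uniqueDiffOn_Ici 2)]
    refine ⟨fun w hw => (Hn_hasDerivWithinAt u n φ h w hw).differentiableWithinAt, by simp, ?_⟩
    refine ContDiffOn.congr (f := fun w => u / 2 * Hn u n (deriv φ) w +
      u^2 / (8 * (n+1)) * (w * Hn u (n+1) (deriv (deriv φ)) w)) ?_ 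
      (fun w hw => (Hn_hasDerivWithinAt u n φ h w hw).derivWithin (uniqueDiffOn_Ici 2 w hw))
    exact (contDiffOn_const.mul (ih _ _ hφ1)).add 
      (contDiffOn_const.mul (contDiffOn_id.mul (ih _ _ hφ2)))

lemma psiF_contDiffOn (f : ℝ → ℝ) (hpos : ∀ x > 0, 0 < f x)
    (hsmooth : ContDiffOn ℝ (⊤ : ℕ∞) f (Ioi 0)) : ContDiffOn ℝ (⊤ : ℕ∞) (psiF f) (Ioi 0) := by
  have h1 : ContDiffOn ℝ (⊤ : ℕ∞) (fun y => Real.log (f y)) (Ioi 0) :=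
    hsmooth.log fun x hx => (hpos x hx).ne'
  have h2 := ((contDiffOn_infty_iff_deriv_of_isOpen isOpen_Ioi).1 h1).2
  exact contDiffOn_id.neg.mul h2

lemma exists_global (p : ℝ → ℝ) (u : ℝ) (hu : 0 < u) (hp : ContDiffOn ℝ (⊤ : ℕ∞) p (Ioi 0)) :
    ∃ g : ℝ → ℝ, ContDiff ℝ (⊤ : ℕ∞) g ∧ p =ᶠ[nhds u] g := by
  let B : ContDiffBump u := ⟨u / 4, u / 2, by linarith, by linarith⟩
  refine ⟨fun x => B x * p x, ?_, ?_⟩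
  · rw [contDiff_iff_contDiffAt]
    intro x
    by_cases hx : 0 < x
    · exact B.contDiffAt.mul (hp.contDiffAt (Ioi_mem_nhds hx))
    · have : (fun x => B x * p x) =ᶠ[nhds x] fun _ => 0 := by
        filter_upwards [Iio_mem_nhds (show x < u / 4 by linarith)] with y hy
        have : B y = 0 := by
          apply B.zero_of_le_dist
          rw [Real.dist_eq, abs_sub_comm, abs_of_nonneg (by linarith [mem_Iio.1 hy])]
          change u / 2 ≤ _
          linarith [mem_Iio.1 hy]
        simp [this]
      exact contDiffAt_const.congr_of_eventuallyEq this
  · filter_upwards [B.eventuallyEq_one] with x hx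
    simp [hx]

lemma vOf_facts (w : ℝ) (hw : 2 ≤ w) : 1 ≤ vOf w ∧ (vOf w)⁻¹ = w - vOf w ∧
    vOf w - (vOf w)⁻¹ = Real.sqrt (w^2-4) := by
  have h0 : 0 ≤ w^2 - 4 := by nlinarith
  have hs := Real.sq_sqrt h0
  have hn := Real.sqrt_nonneg (w^2-4)
  have h1 : 1 ≤ vOf w := by unfold vOf; linarith
  have h2 : (vOf w)⁻¹ = w - vOf w := by
    apply inv_eq_of_mul_eq_one_right
    unfold vOf
    nlinarith
  refine ⟨h1, h2, ?_⟩
  rw [h2]; unfold vOf; ring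

lemma coeff_eq (g : ℝ → ℝ) (hg : ContDiff ℝ (⊤ : ℕ∞) g) (u : ℝ) (k : ℕ) :
    ((2 * k + 1).factorial : ℝ)⁻¹ *
      iteratedDeriv k (fun y => y ^ (2 * k + 1) * iteratedDeriv (k + 1) g y) u
    = ∑ i ∈ Finset.range (k+1), (k.choose i : ℝ) *
        (u^(k+i+1) / ((k+i+1).factorial : ℝ) * iteratedDeriv (k+i+1) g u) := by
  have hg' : ContDiff ℝ k (iteratedDeriv (k+1) g) := by
    apply ContDiff.iterate_deriv' k (k+1) (hg.of_le _) |> (by rw [iteratedDeriv_eq_iterate]; exact ·)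
    exact_mod_cast le_top
  rw [iteratedDeriv_fun_mul (by fun_prop) hg'.contDiffAt, Finset.mul_sum,
    ← Finset.sum_flip]
  refine Finset.sum_congr rfl fun i hi => ?_
  have hi : i ≤ k := Nat.lt_succ_iff.1 (Finset.mem_range.1 hi)
  rw [iteratedDeriv_pow, Nat.choose_symm hi, show k - (k - i) = i by omega,
    show 2 * k + 1 - (k - i) = k + i + 1 by omega]
  have h1 : iteratedDeriv i (iteratedDeriv (k+1) g) = iteratedDeriv (k+i+1) g := by
    rw [show k + i + 1 = i + (k + 1) by omega]
    simp only [iteratedDeriv_eq_iterate, Function.iterate_add_apply]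
  have h2 := Nat.factorial_mul_descFactorial (show k - i ≤ 2*k+1 by omega)
  rw [show 2 * k + 1 - (k - i) = k + i + 1 by omega] at h2
  rw [h1, ← h2]
  push_cast
  have := Nat.factorial_pos (k+i+1)
  have h3 : 0 < (2*k+1).descFactorial (k-i) := Nat.pos_of_ne_zero (by
    rw [Ne, Nat.descFactorial_eq_zero_iff_lt]; omega)
  field_simp

def bco (m k : ℕ) : ℕ := if k ≤ m then k.choose (m - k) else 0

lemma bco_rec (m k : ℕ) : bco (m+2) (k+1) = bco (m+1) k + bco m k := by
  unfold bco
  rcases lt_trichotomy k (m+1) with h | h | h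
  · rw [if_pos (by omega), if_pos (by omega), if_pos (by omega),
      show m + 2 - (k+1) = (m - k) + 1 by omega, show m + 1 - k = (m-k)+1 by omega,
      Nat.choose_succ_succ, add_comm]
  · subst h; simp
  · rw [if_neg (by omega), if_neg (by omega), if_neg (by omega)]

def qpol (e : ℝ) : ℕ → ℝ
  | 0 => 1
  | 1 => e
  | (m+2) => e * (qpol e (m+1) + qpol e m)

lemma qpol_mul (X Y e : ℝ) (h1 : X + Y = e) (h2 : X * Y = -e) : ∀ m,
    X^(m+1) - Y^(m+1) = (X - Y) * qpol e m
  | 0 => by simp [qpol]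
  | 1 => by simp only [qpol]; rw [← h1]; ring
  | (m+2) => by
    have e1 := qpol_mul X Y e h1 h2 (m+1)
    have e2 := qpol_mul X Y e h1 h2 m
    simp only [qpol]
    have : X^(m+2+1) - Y^(m+2+1) = (X+Y) * (X^(m+1+1) - Y^(m+1+1)) - X*Y * (X^(m+1)-Y^(m+1)) := by
      ring
    rw [this, e1, e2, h1, h2]; ring

lemma qpol_eq (e : ℝ) : ∀ m K, m < K → qpol e m = ∑ k ∈ Finset.range K, (bco m k : ℝ) * e^k
  | 0, K+1, h => by
    rw [Finset.sum_range_succ']; simp [qpol, bco]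
  | 1, K+2, h => by
    rw [Finset.sum_range_succ', Finset.sum_range_succ']; simp [qpol, bco]
  | (m+2), K+1, h => by
    rw [Finset.sum_range_succ']
    simp only [qpol, bco_rec]
    rw [qpol_eq e (m+1) K (by omega), qpol_eq e m K (by omega), ← Finset.sum_add_distrib,
      Finset.mul_sum]
    have : bco (m+2) 0 = 0 := by simp [bco]
    rw [this]
    simp only [Nat.cast_zero, zero_mul, add_zero]
    refine Finset.sum_congr rfl fun k _ => ?_
    push_cast; ring

lemma bco_sum (a : ℕ → ℝ) (k K : ℕ) (h : 2 * k < K) :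
    ∑ i ∈ Finset.range (k+1), (k.choose i : ℝ) * a (k+i+1)
    = ∑ m ∈ Finset.range K, a (m+1) * (bco m k : ℝ) := by
  have hs : Finset.Ico k (2*k+1) ⊆ Finset.range K := by
    intro x hx
    simp at hx ⊢; omega
  rw [← Finset.sum_subset hs, Finset.sum_Ico_eq_sum_range, show 2 * k + 1 - k = k + 1 by omega]
  · refine Finset.sum_congr rfl fun i _ => ?_
    simp [bco, mul_comm]
  · intro m _ hm
    simp only [Finset.mem_Ico, not_and, not_lt] at hm
    unfold bco
    split_ifs with hk
    · rw [Nat.choose_eq_zero_of_lt (by have := hm hk; omega)]; simp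
    · simp

lemma rem_bound (u Z d e R : ℝ) (N : ℕ) (hd : 0 < d) (hu : 0 < u) (he : 0 ≤ e)
    (hZ : |Z| ≤ d) (hZ2 : Z^2 ≤ 2 * e) (hR : |R| ≤ |(u * Z)^(2*N+3)|) :
    |R / d| ≤ u^(2*N+3) * 2^(N+1) * e^(N+1) := by
  rw [abs_div, abs_of_pos hd, div_le_iff₀ hd]
  refine hR.trans ?_
  rw [abs_pow, abs_mul, abs_of_pos hu, mul_pow]
  have h1 : |Z|^(2*N+3) = (Z^2)^(N+1) * |Z| := by
    rw [← sq_abs Z]; ring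
  rw [h1]
  have h2 : (Z^2)^(N+1) ≤ (2*e)^(N+1) := pow_le_pow_left₀ (sq_nonneg _) hZ2 _
  calc u^(2*N+3) * ((Z^2)^(N+1) * |Z|) ≤ u^(2*N+3) * ((2*e)^(N+1) * d) := by gcongr
    _ = _ := by rw [mul_pow]; ring

lemma vOf_tendsto : Tendsto vOf (nhdsWithin 2 (Ioi 2)) (nhds 1) := by
  have : Continuous vOf := by unfold vOf; fun_prop
  have h := this.tendsto 2
  have h2 : vOf 2 = 1 := by unfold vOf; norm_num
  rw [h2] at h
  exact h.mono_left nhdsWithin_le_nhds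

lemma part1 (g : ℝ → ℝ) (hg : ContDiff ℝ (⊤ : ℕ∞) g) (u : ℝ) (hu : 0 < u) (N : ℕ) :
    (fun w => (g (u * vOf w) - g (u / vOf w)) / (vOf w - (vOf w)⁻¹) -
        ∑ j ∈ Finset.range (N + 1),
          ((2 * j + 1).factorial : ℝ)⁻¹ *
            iteratedDeriv j (fun y => y ^ (2 * j + 1) * iteratedDeriv (j + 1) g y) u *
          (w - 2) ^ j)
        =O[nhdsWithin 2 (Ioi 2)] fun w => (w - 2) ^ (N + 1) := by
  set a : ℕ → ℝ := fun n => u^n / (n.factorial : ℝ) * iteratedDeriv n g u with ha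
  set M := 2*N+3 with hM
  set R : ℝ → ℝ := fun x => g x - taylorWithinEval g M univ u x with hRdef
  have hR : R =o[nhds u] fun x => (x - u)^M :=
    taylor_isLittleO_univ (hg.of_le (by exact_mod_cast le_top))
  have hT : ∀ v, g (u * v) = R (u * v) + (∑ m ∈ Finset.range M, a (m+1) * (v-1)^(m+1) + a 0) := by
    intro v
    simp only [hRdef, taylor_within_apply, iteratedDerivWithin_univ]
    have : ∑ m ∈ Finset.range M, a (m+1) * (v-1)^(m+1) + a 0 =
       ∑ m ∈ Finset.range (M+1), a m * (v-1)^m := by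
      rw [Finset.sum_range_succ' _ M]; simp
    rw [this]
    have : ∀ m ∈ Finset.range (M+1), ((m.factorial : ℝ)⁻¹ * (u * v - u)^m) • iteratedDeriv m g u =
       a m * (v-1)^m := by
      intro m _
      rw [show u * v - u = u * (v - 1) by ring, mul_pow, smul_eq_mul, ha]
      ring
    rw [Finset.sum_congr rfl this]; ring
  set d : ℕ → ℝ := fun k => ∑ m ∈ Finset.range M, a (m+1) * (bco m k : ℝ) with hdd
  have hco : ∀ j ∈ Finset.range (N+1), ((2 * j + 1).factorial : ℝ)⁻¹ *
            iteratedDeriv j (fun y => y ^ (2 * j + 1) * iteratedDeriv (j + 1) g y) u = d j := by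
    intro j hj
    rw [coeff_eq g hg, hdd]
    have := Finset.mem_range.1 hj
    exact bco_sum a j M (by omega)
  have hmain : (fun w => (g (u * vOf w) - g (u / vOf w)) / (vOf w - (vOf w)⁻¹) -
        ∑ j ∈ Finset.range (N + 1),
          ((2 * j + 1).factorial : ℝ)⁻¹ *
            iteratedDeriv j (fun y => y ^ (2 * j + 1) * iteratedDeriv (j + 1) g y) u *
          (w - 2) ^ j) =ᶠ[nhdsWithin 2 (Ioi 2)] fun w => 
      (R (u * vOf w) / (vOf w - (vOf w)⁻¹) - R (u * (vOf w)⁻¹) / (vOf w - (vOf w)⁻¹)) + 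
       ∑ j ∈ Finset.range (N+2), d (N+1+j) * ((w-2)^j * (w-2)^(N+1)) := by
    filter_upwards [self_mem_nhdsWithin] with w hw
    have hw : 2 < w := hw
    obtain ⟨f1, f2, f3⟩ := vOf_facts w hw.le
    have hd0 : 0 < vOf w - (vOf w)⁻¹ := by rw [f3]; exact Real.sqrt_pos.2 (by nlinarith)
    have hv : vOf w * (vOf w)⁻¹ = 1 := mul_inv_cancel₀ (by linarith)
    set v := vOf w
    set y := v⁻¹
    have e1 : (v - 1) + (y - 1) = w - 2 := by linarith
    have e2 : (v - 1) * (y - 1) = -(w - 2) := by linear_combination hv - f2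
    have hsum : ∑ m ∈ Finset.range M, a (m+1) * (v-1)^(m+1) - ∑ m ∈ Finset.range M, a (m+1) * (y-1)^(m+1)
       = (v - y) * ∑ k ∈ Finset.range M, d k * (w-2)^k := by
      rw [← Finset.sum_sub_distrib]
      simp only [hdd, Finset.sum_mul]
      rw [Finset.sum_comm, Finset.mul_sum]
      refine Finset.sum_congr rfl fun m hm => ?_
      rw [← mul_sub, qpol_mul _ _ _ e1 e2, qpol_eq _ m M (Finset.mem_range.1 hm)]
      simp only [Finset.mul_sum]
      refine Finset.sum_congr rfl fun k _ => ?_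
      ring
    have hsplit : ∑ k ∈ Finset.range M, d k * (w-2)^k = ∑ j ∈ Finset.range (N+1), d j * (w-2)^j +
       ∑ j ∈ Finset.range (N+2), d (N+1+j) * ((w-2)^j * (w-2)^(N+1)) := by
      rw [show M = (N+1) + (N+2) by omega, Finset.sum_range_add]
      congr 1
      refine Finset.sum_congr rfl fun k _ => ?_
      ring
    rw [Finset.sum_congr rfl (fun j hj => by rw [hco j hj]), div_eq_mul_inv u v, hT v, hT y]
    rw [show R (u * v) + (∑ m ∈ Finset.range M, a (m+1) * (v-1)^(m+1) + a 0) - 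
       (R (u * y) + (∑ m ∈ Finset.range M, a (m+1) * (y-1)^(m+1) + a 0)) = 
       R (u * v) - R (u*y) + (∑ m ∈ Finset.range M, a (m+1) * (v-1)^(m+1) - 
         ∑ m ∈ Finset.range M, a (m+1) * (y-1)^(m+1)) by ring, hsum, hsplit]
    field_simp
    ring
  refine Asymptotics.IsBigO.congr' (f₁ := _) ?_ hmain.symm EventuallyEq.rfl
  have t1 : Tendsto (fun w => u * vOf w) (nhdsWithin 2 (Ioi 2)) (nhds u) := by
    simpa using vOf_tendsto.const_mul u
  have t2 : Tendsto (fun w => u * (vOf w)⁻¹) (nhdsWithin 2 (Ioi 2)) (nhds u) := by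
    simpa using (vOf_tendsto.inv₀ one_ne_zero).const_mul u
  have b1 := t1.eventually (hR.bound one_pos)
  have b2 := t2.eventually (hR.bound one_pos)
  have b3 := vOf_tendsto.eventually (Iio_mem_nhds (show (1:ℝ) < 2 by norm_num))
  refine ((Asymptotics.IsBigO.of_bound (u^M * 2^(N+1)) ?_).sub 
     (Asymptotics.IsBigO.of_bound (u^M * 2^(N+1)) ?_)).add (Asymptotics.IsBigO.fun_sum fun j _ => ?_)
  · filter_upwards [self_mem_nhdsWithin, b1, b3] with w hw hb hv2
    have hw : 2 < w := hw
    obtain ⟨f1, f2, f3⟩ := vOf_facts w hw.le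
    have hd0 : 0 < vOf w - (vOf w)⁻¹ := by rw [f3]; exact Real.sqrt_pos.2 (by nlinarith)
    have hv : vOf w * (vOf w)⁻¹ = 1 := mul_inv_cancel₀ (by linarith)
    have hv2 : vOf w < 2 := hv2
    have hinv : (vOf w)⁻¹ ≤ 1 := inv_le_one_of_one_le₀ f1
    simp only [Real.norm_eq_abs] at hb ⊢
    rw [abs_of_nonneg (show 0 ≤ (w-2)^(N+1) by have : 0 ≤ w - 2 := by linarith
                                               positivity)]
    apply rem_bound u (vOf w - 1) _ _ _ N hd0 hu (by linarith)
    · rw [abs_of_nonneg (by linarith)]; linarith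
    · nlinarith
    · rw [one_mul] at hb
      rw [mul_sub, mul_one]; exact hb
  · filter_upwards [self_mem_nhdsWithin, b2, b3] with w hw hb hv2
    have hw : 2 < w := hw
    obtain ⟨f1, f2, f3⟩ := vOf_facts w hw.le
    have hd0 : 0 < vOf w - (vOf w)⁻¹ := by rw [f3]; exact Real.sqrt_pos.2 (by nlinarith)
    have hv : vOf w * (vOf w)⁻¹ = 1 := mul_inv_cancel₀ (by linarith)
    have hinv : (vOf w)⁻¹ ≤ 1 := inv_le_one_of_one_le₀ f1
    simp only [Real.norm_eq_abs] at hb ⊢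
    rw [abs_of_nonneg (show 0 ≤ (w-2)^(N+1) by have : 0 ≤ w - 2 := by linarith
                                               positivity)]
    apply rem_bound u ((vOf w)⁻¹ - 1) _ _ _ N hd0 hu (by linarith)
    · rw [abs_of_nonpos (by linarith)]; linarith
    · have : 0 < (vOf w)⁻¹ := by positivity
      have e : ((vOf w)⁻¹ - 1)^2 = (w-2) * (vOf w)⁻¹ := by
        linear_combination (vOf w)⁻¹ * f2 - hv
      rw [e]
      nlinarith
    · rw [one_mul] at hb
      rw [mul_sub, mul_one]; exact hb
  · have : (fun w : ℝ => d (N+1+j) * (w-2)^j) =O[nhdsWithin 2 (Ioi 2)] fun _ => (1:ℝ) := by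
      have : Continuous (fun w : ℝ => d (N+1+j) * (w-2)^j) := by fun_prop
      exact ((this.tendsto 2).mono_left nhdsWithin_le_nhds).isBigO_one ℝ
    have := this.mul (Asymptotics.isBigO_refl (fun w : ℝ => (w-2)^(N+1)) (nhdsWithin 2 (Ioi 2)))
    simpa [mul_assoc] using this

lemma Hn_eq (g : ℝ → ℝ) (hg : ContDiff ℝ (⊤ : ℕ∞) g) (u : ℝ) (hu : 0 < u) (w : ℝ) (hw : 2 < w) :
    (g (u * vOf w) - g (u / vOf w)) / (vOf w - (vOf w)⁻¹) = u / 2 * Hn u 0 (deriv g) w := by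
  obtain ⟨f1, f2, f3⟩ := vOf_facts w hw.le
  have hr : 0 < Real.sqrt (w^2-4) := Real.sqrt_pos.2 (by nlinarith)
  have hc := (contDiff_infty_iff_deriv.1 hg).2.continuous
  rw [f3, div_eq_mul_inv u, f2]
  unfold Hn vOf
  set r := Real.sqrt (w^2-4)
  have hV : ∀ t : ℝ, HasDerivAt (fun t : ℝ => g (u * w / 2 + t * (u / 2 * r)))
      (deriv g (u * w / 2 + t * (u / 2 * r)) * (u / 2 * r)) t := by
    intro t
    have h1 : HasDerivAt (fun t : ℝ => u * w / 2 + t * (u / 2 * r)) (u / 2 * r) t := by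
      simpa using ((hasDerivAt_id t).mul_const (u / 2 * r)).const_add (u * w / 2)
    exact (((hg.differentiable (by simp)) _).hasDerivAt).comp t h1
  have h := intervalIntegral.integral_eq_sub_of_hasDerivAt (a := -1) (b := 1) (fun t _ => hV t)
    (Continuous.intervalIntegrable (by fun_prop) _ _)
  rw [intervalIntegral.integral_mul_const] at h
  simp only [pow_zero, one_mul]
  rw [show u * ((w + r) / 2) = u * w / 2 + 1 * (u / 2 * r) by ring,
    show u * (w - (w + r) / 2) = u * w / 2 + -1 * (u / 2 * r) by ring, ← h]
  generalize (∫ t in (-1:ℝ)..1, deriv g (u * w / 2 + t * (u / 2 * r))) = I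
  field_simp

lemma Hn_two (g : ℝ → ℝ) (u : ℝ) : u / 2 * Hn u 0 g 2 = u * g u := by
  unfold Hn
  norm_num
  ring

lemma part2 (g : ℝ → ℝ) (hg : ContDiff ℝ (⊤ : ℕ∞) g) (u : ℝ) (hu : 0 < u) (k : ℕ) :
    iteratedDerivWithin k (fun w => u / 2 * Hn u 0 (deriv g) w) (Ici 2) 2
        = ((k.factorial : ℝ) / ((2 * k + 1).factorial : ℝ)) *
            iteratedDeriv k
              (fun y => y ^ (2 * k + 1) * iteratedDeriv (k + 1) g y) u := by
  set h := fun w => u / 2 * Hn u 0 (deriv g) w with hh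
  have hsm : ∀ k : ℕ, ContDiffOn ℝ k h (Ici 2) := fun k =>
    contDiffOn_const.mul (Hn_contDiffOn u k 0 _ (contDiff_infty_iff_deriv.1 hg).2)
  set c : ℕ → ℝ := fun j => ((2 * j + 1).factorial : ℝ)⁻¹ *
            iteratedDeriv j (fun y => y ^ (2 * j + 1) * iteratedDeriv (j + 1) g y) u with hc
  set e : ℕ → ℝ := fun j => (j.factorial : ℝ)⁻¹ * iteratedDerivWithin j h (Ici 2) 2 with he
  have key : ∀ k, e k = c k := by
    intro k
    induction k using Nat.strong_induction_on with
    | _ k ih =>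
    have h1 := (taylor_isLittleO (convex_Ici (2:ℝ)) (self_mem_Ici) (hsm k)).mono
      (nhdsWithin_mono (2:ℝ) Ioi_subset_Ici_self)
    have h2 : (fun w => h w - ∑ j ∈ Finset.range (k+1), c j * (w-2)^j) =o[nhdsWithin 2 (Ioi 2)]
        fun w => (w-2)^k := by
      have h3 := part1 g hg u hu k
      have h4 : (fun w : ℝ => (w-2)^(k+1)) =o[nhdsWithin 2 (Ioi 2)] fun w => (w-2)^k := by
        have : (fun w : ℝ => w - 2) =o[nhdsWithin 2 (Ioi 2)] fun _ => (1:ℝ) := by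
          rw [Asymptotics.isLittleO_one_iff]
          have : Continuous (fun w : ℝ => w - 2) := by fun_prop
          have := (this.tendsto 2).mono_left (nhdsWithin_le_nhds (s := Ioi 2))
          simpa using this
        have := this.mul_isBigO (Asymptotics.isBigO_refl (fun w : ℝ => (w-2)^k) (nhdsWithin 2 (Ioi 2)))
        simpa [pow_succ'] using this
      refine (h3.trans_isLittleO h4).congr' ?_ EventuallyEq.rfl
      filter_upwards [self_mem_nhdsWithin] with w hw
      rw [Hn_eq g hg u hu w hw]
    have h5 := h2.sub h1
    have h6 : (fun w : ℝ => (e k - c k) * (w-2)^k) =o[nhdsWithin 2 (Ioi 2)] fun w => (w-2)^k := by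
      refine h5.congr_left fun w => ?_
      rw [taylor_within_apply, Finset.sum_range_succ, Finset.sum_range_succ]
      have : ∀ j ∈ Finset.range k, ((j.factorial : ℝ)⁻¹ * (w-2)^j) • iteratedDerivWithin j h (Ici 2) 2
         = c j * (w-2)^j := by
        intro j hj
        rw [← ih j (Finset.mem_range.1 hj), he, smul_eq_mul]; ring
      rw [Finset.sum_congr rfl this, he, smul_eq_mul]; ring
    by_contra hne
    have hne : e k - c k ≠ 0 := sub_ne_zero.2 hne
    have h7 := (Asymptotics.isLittleO_const_mul_left_iff hne).1 h6
    have h8 := (Asymptotics.isLittleO_irrefl' (l := nhdsWithin (2:ℝ) (Ioi 2)) (f' := fun w : ℝ => (w-2)^k) ?_)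
    · exact h8 h7
    · apply Eventually.frequently
      filter_upwards [self_mem_nhdsWithin] with w hw
      have : 0 < w - 2 := by linarith [mem_Ioi.1 hw]
      exact (norm_pos_iff.2 (by positivity)).ne'
  have := key k
  simp only [he, hc] at this
  have hf : (k.factorial : ℝ) ≠ 0 := by exact_mod_cast (Nat.factorial_pos k).ne'
  rw [inv_mul_eq_iff_eq_mul₀ hf] at this
  rw [this]; ring

/-- Lemma 4: for smooth positive `f` and `u > 0`, `Δ_u(f)` admits the
expansion `Δ_u(f)(w) = ∑_{j=0}^N c_j (w-2)^j + O((w-2)^{N+1})` as `w ↓ 2`, with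
`c_j = (1/(2j+1)!) (u^{2j+1} ψ_f^{(j+1)}(u))^{(j)}`; in particular the `k`-th right
derivative of (the continuous extension of) `Δ_u(f)` at `w = 2` equals
`(k!/(2k+1)!) (u^{2k+1} ψ_f^{(k+1)}(u))^{(k)}`. -/
theorem deltaU_taylor_expansion_at_two (f : ℝ → ℝ) (hpos : ∀ x > 0, 0 < f x)
    (hsmooth : ContDiffOn ℝ (⊤ : ℕ∞) f (Ioi 0)) (u : ℝ) (hu : 0 < u) :
    (∀ N : ℕ,
      (fun w => DeltaU f u w -
        ∑ j ∈ Finset.range (N + 1),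
          ((2 * j + 1).factorial : ℝ)⁻¹ *
            iteratedDeriv j
              (fun y => y ^ (2 * j + 1) * iteratedDeriv (j + 1) (psiF f) y) u *
          (w - 2) ^ j)
        =O[nhdsWithin 2 (Ioi 2)] fun w => (w - 2) ^ (N + 1)) ∧
    (∀ k : ℕ,
      iteratedDerivWithin k
        (fun w => if 2 < w then DeltaU f u w else u * deriv (psiF f) u) (Ici 2) 2
        = ((k.factorial : ℝ) / ((2 * k + 1).factorial : ℝ)) *
            iteratedDeriv k
              (fun y => y ^ (2 * k + 1) * iteratedDeriv (k + 1) (psiF f) y) u) := by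
  obtain ⟨g, hg, hpg⟩ := exists_global (psiF f) u hu (psiF_contDiffOn f hpos hsmooth)
  have hco : ∀ j : ℕ, iteratedDeriv j
        (fun y => y ^ (2 * j + 1) * iteratedDeriv (j + 1) (psiF f) y) u = iteratedDeriv j
        (fun y => y ^ (2 * j + 1) * iteratedDeriv (j + 1) g y) u := by
    intro j
    apply Filter.EventuallyEq.iteratedDeriv_eq
    filter_upwards [hpg.iteratedDeriv (j+1)] with y hy
    rw [hy]
  have t1 : Tendsto (fun w => u * vOf w) (nhdsWithin 2 (Ioi 2)) (nhds u) := by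
    simpa using vOf_tendsto.const_mul u
  have t2 : Tendsto (fun w => u / vOf w) (nhdsWithin 2 (Ioi 2)) (nhds u) := by
    simpa [div_eq_mul_inv] using (vOf_tendsto.inv₀ one_ne_zero).const_mul u
  have hD : (fun w => DeltaU f u w) =ᶠ[nhdsWithin 2 (Ioi 2)]
      fun w => (g (u * vOf w) - g (u / vOf w)) / (vOf w - (vOf w)⁻¹) := by
    filter_upwards [t1.eventually hpg, t2.eventually hpg] with w h1 h2
    rw [DeltaU, h1, h2]
  refine ⟨fun N => ?_, fun k => ?_⟩
  · refine (part1 g hg u hu N).congr' ?_ EventuallyEq.rfl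
    filter_upwards [hD] with w hw
    simp only [hco]
    rw [hw]
  · rw [hco, ← part2 g hg u hu k]
    apply Filter.EventuallyEq.iteratedDerivWithin_eq
    · rw [← Ioi_insert, nhdsWithin_insert]
      refine Filter.eventually_sup.2 ⟨?_, ?_⟩
      · simp only [Filter.eventually_pure, lt_self_iff_false, if_false]
        rw [Hn_two, hpg.deriv_eq]
      · filter_upwards [hD, self_mem_nhdsWithin] with w h1 h2
        rw [if_pos (mem_Ioi.1 h2), h1, Hn_eq g hg u hu w h2]
    · simp only [lt_self_iff_false, if_false]
      rw [Hn_two, hpg.deriv_eq]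
end

section
/- Let k ≥ 1 be an integer and u > 0 with u ≠ 1. Then for every w > u + u^{−1}, the k-th derivative of Δ_{k,u} at w equals (−1)^k (2k)! (w − u − u^{−1})^k / ( k! (w² − 4)^{k + 1/2} ). -/
open Set MeasureTheory Filter

theorem aux_le_top (k : ℕ) : (k : WithTop ℕ∞) ≤ ((⊤ : ℕ∞) : WithTop ℕ∞) := by
  exact_mod_cast (le_top : ((k : ℕ) : ℕ∞) ≤ ⊤)

theorem aux_smooth {s : Set ℝ} (hs : IsOpen s) {f : ℝ → ℝ} (hf : ContDiffOn ℝ (⊤ : ℕ∞) f s)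
    (n : ℕ) : ContDiffOn ℝ (⊤ : ℕ∞) (iteratedDeriv n f) s := by
  induction n with
  | zero => simpa using hf
  | succ n ih =>
    rw [iteratedDeriv_succ]
    exact ih.deriv_of_isOpen hs (by simp)

theorem aux_hasDeriv {s : Set ℝ} (hs : IsOpen s) {f : ℝ → ℝ} (hf : ContDiffOn ℝ (⊤ : ℕ∞) f s)
    (n : ℕ) {x : ℝ} (hx : x ∈ s) :
    HasDerivAt (iteratedDeriv n f) (iteratedDeriv (n + 1) f x) x := by
  rw [iteratedDeriv_succ]
  exact ((((aux_smooth hs hf n).contDiffAt (hs.mem_nhds hx))).differentiableAt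
    (by simp)).hasDerivAt

theorem aux_next {s : Set ℝ} (hs : IsOpen s) {f g : ℝ → ℝ} {n : ℕ}
    (h : ∀ x ∈ s, iteratedDeriv n f x = g x) {x d : ℝ} (hx : x ∈ s) (hd : HasDerivAt g d x) :
    iteratedDeriv (n + 1) f x = d := by
  rw [iteratedDeriv_succ]
  have : iteratedDeriv n f =ᶠ[nhds x] g := by
    filter_upwards [hs.mem_nhds hx] with y hy using h y hy
  rw [this.deriv_eq, hd.deriv]

theorem aux_leib {s : Set ℝ} (hs : IsOpen s) {f : ℝ → ℝ} (hf : ContDiffOn ℝ (⊤ : ℕ∞) f s)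
    (a b : ℝ) (n : ℕ) : ∀ x ∈ s, iteratedDeriv (n + 1) (fun y => (a * y + b) * f y) x
      = (a * x + b) * iteratedDeriv (n + 1) f x + (n + 1) * a * iteratedDeriv n f x := by
  have hl : ∀ x : ℝ, HasDerivAt (fun y => a * y + b) a x := fun x => by
    simpa using ((hasDerivAt_id x).const_mul a).add_const b
  induction n with
  | zero =>
    intro x hx
    refine aux_next hs (g := fun y => (a * y + b) * f y) (by simp) hx ?_
    have h0 := aux_hasDeriv hs hf 0 hx
    have := (hl x).mul h0
    rw [iteratedDeriv_zero] at this
    refine this.congr_deriv ?_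
    simp; ring
  | succ n ih =>
    intro x hx
    refine aux_next hs ih hx ?_
    have h1 := ((hl x).mul (aux_hasDeriv hs hf (n + 1) hx)).add
      ((aux_hasDeriv hs hf n hx).const_mul (((n : ℝ) + 1) * a))
    refine h1.congr_deriv ?_
    push_cast; ring

/-- The functions `q_k / √(w²-4)`. -/
noncomputable def fA (c : ℝ) : ℕ → ℝ → ℝ
  | 0 => fun w => (Real.sqrt (w ^ 2 - 4))⁻¹
  | 1 => fun w => (c / 2 * w + (-2)) * (Real.sqrt (w ^ 2 - 4))⁻¹
  | (n + 2) => fun w => (c * w + (-4)) * fA c (n + 1) w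
      - (1 * w + (-c)) * ((1 * w + (-c)) * fA c n w)

/-- The claimed derivatives. -/
noncomputable def gA (c : ℝ) : ℕ → ℝ → ℝ
  | 0 => fun w => (Real.sqrt (w ^ 2 - 4))⁻¹
  | (n + 1) => fun w => (2 * (2 * n + 1) * ((w - c) / (w ^ 2 - 4))) * gA c n w

theorem fA_smooth {c : ℝ} (hc : 2 ≤ c) (n : ℕ) : ContDiffOn ℝ (⊤ : ℕ∞) (fA c n) (Ioi c) := by
  have h0 : ContDiffOn ℝ (⊤ : ℕ∞) (fA c 0) (Ioi c) := by
    intro x hx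
    have hx : c < x := hx
    have hR : 0 < x ^ 2 - 4 := by nlinarith
    apply ContDiffAt.contDiffWithinAt
    unfold fA
    apply ContDiffAt.inv
    · apply ContDiffAt.sqrt
      · fun_prop
      · exact hR.ne'
    · exact (Real.sqrt_pos.2 hR).ne'
  have h1 : ContDiffOn ℝ (⊤ : ℕ∞) (fA c 1) (Ioi c) := by
    unfold fA
    exact ContDiffOn.mul (by fun_prop) h0
  induction n using Nat.strong_induction_on with
  | _ n ih =>
    match n, ih with
    | 0, _ => exact h0
    | 1, _ => exact h1
    | n + 2, ih =>
      unfold fA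
      exact ContDiffOn.sub (ContDiffOn.mul (by fun_prop) (ih (n + 1) (by omega)))
        (ContDiffOn.mul (by fun_prop) (ContDiffOn.mul (by fun_prop) (ih n (by omega))))

theorem gA_deriv {c : ℝ} (hc : 2 ≤ c) (n : ℕ) {x : ℝ} (hx : c < x) :
    HasDerivAt (gA c n) ((n / (x - c) - (2 * n + 1) * x / (x ^ 2 - 4)) * gA c n x) x := by
  have hR : 0 < x ^ 2 - 4 := by nlinarith
  have hl : x - c ≠ 0 := by linarith
  have hRd : HasDerivAt (fun y : ℝ => y ^ 2 - 4) (2 * x) x := by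
    simpa using (hasDerivAt_pow 2 x).sub_const 4
  have hld : HasDerivAt (fun y : ℝ => y - c) 1 x := (hasDerivAt_id x).sub_const c
  induction n with
  | zero =>
    have hs := (Real.sqrt_pos.2 hR).ne'
    have := (hRd.sqrt hR.ne').inv hs
    refine this.congr_deriv ?_
    simp only [gA, Real.sq_sqrt hR.le]
    field_simp
    simp
  | succ n ih =>
    have := ((hld.div hRd hR.ne').const_mul (2 * (2 * (n : ℝ) + 1))).mul ih
    refine this.congr_deriv ?_
    have hR' := hR.ne'
    simp only [gA, Pi.div_apply]
    push_cast
    generalize gA c n x = G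
    field_simp
    ring

theorem gA_deriv2 {c : ℝ} (hc : 2 ≤ c) (n : ℕ) {x : ℝ} (hx : c < x) :
    HasDerivAt (fun x => (n / (x - c) - (2 * n + 1) * x / (x ^ 2 - 4)) * gA c n x)
      (((n / (x - c) - (2 * n + 1) * x / (x ^ 2 - 4)) ^ 2 - n / (x - c) ^ 2
        - (2 * n + 1) * (1 / (x ^ 2 - 4) - 2 * x ^ 2 / (x ^ 2 - 4) ^ 2)) * gA c n x) x := by
  have hR : 0 < x ^ 2 - 4 := by nlinarith
  have hl : x - c ≠ 0 := by linarith
  have hRd : HasDerivAt (fun y : ℝ => y ^ 2 - 4) (2 * x) x := by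
    simpa using (hasDerivAt_pow 2 x).sub_const 4
  have hld : HasDerivAt (fun y : ℝ => y - c) 1 x := (hasDerivAt_id x).sub_const c
  have hR' := hR.ne'
  have h1 := (hasDerivAt_const x (n : ℝ)).div hld hl
  have h2 := ((hasDerivAt_id x).const_mul (2 * (n : ℝ) + 1)).div hRd hR'
  have := (h1.sub h2).mul (gA_deriv hc n hx)
  refine this.congr_deriv ?_
  simp only [Pi.div_apply, Pi.sub_apply, id]
  generalize gA c n x = G
  field_simp
  ring

theorem fA_main {c : ℝ} (hc : 2 ≤ c) (n : ℕ) :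
    ∀ x ∈ Ioi c, iteratedDeriv n (fA c n) x = gA c n x := by
  have hs : IsOpen (Ioi c) := isOpen_Ioi
  have h0 : ∀ x ∈ Ioi c, iteratedDeriv 0 (fA c 0) x = gA c 0 x := by
    intro x _; simp [fA, gA]
  induction n using Nat.strong_induction_on with
  | _ n ih =>
    match n, ih with
    | 0, _ => exact h0
    | 1, _ =>
      intro x hx
      have hx' : c < x := hx
      have hR : x ^ 2 - 4 ≠ 0 := by nlinarith
      have hl : x - c ≠ 0 := by linarith
      have := aux_leib hs (fA_smooth hc 0) (c / 2) (-2) 0 x hx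
      rw [show fA c 1 = fun y => (c / 2 * y + (-2)) * fA c 0 y from rfl]
      rw [this, aux_next hs h0 hx (gA_deriv hc 0 hx'), h0 x hx]
      simp only [gA]
      push_cast
      field_simp
      ring
    | n + 2, ih =>
      intro x hx
      have hx' : c < x := hx
      have hR : x ^ 2 - 4 ≠ 0 := by nlinarith
      have hl : x - c ≠ 0 := by linarith
      have e0 := ih n (by omega)
      have e1 := ih (n + 1) (by omega)
      have s0 := fA_smooth hc n
      have s1 := fA_smooth hc (n + 1)
      have e0' : ∀ x ∈ Ioi c, iteratedDeriv (n + 1) (fA c n) x = _ :=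
        fun x hx => aux_next hs e0 hx (gA_deriv hc n hx)
      have e0'' := aux_next hs e0' hx (gA_deriv2 hc n hx)
      have e1' := aux_next hs e1 hx (gA_deriv hc (n + 1) hx)
      have sl : ContDiffOn ℝ (⊤ : ℕ∞) (fun y => (1 * y + (-c)) * fA c n y) (Ioi c) :=
        ContDiffOn.mul (by fun_prop) s0
      have t1 : ContDiffOn ℝ (⊤ : ℕ∞) (fun y => (c * y + (-4)) * fA c (n + 1) y) (Ioi c) :=
        ContDiffOn.mul (by fun_prop) s1
      have t2 : ContDiffOn ℝ (⊤ : ℕ∞)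
          (fun y => (1 * y + (-c)) * ((1 * y + (-c)) * fA c n y)) (Ioi c) :=
        ContDiffOn.mul (by fun_prop) sl
      have hn := hs.mem_nhds hx
      have l1 := aux_leib hs s1 c (-4) (n + 1) x hx
      have l2 := aux_leib hs sl 1 (-c) (n + 1) x hx
      have l3 := aux_leib hs s0 1 (-c) (n + 1) x hx
      have l4 := aux_leib hs s0 1 (-c) n x hx
      rw [show fA c (n + 2) = (fun y => (c * y + (-4)) * fA c (n + 1) y) -
        (fun y => (1 * y + (-c)) * ((1 * y + (-c)) * fA c n y)) from rfl,
        iteratedDeriv_sub ((t1.contDiffAt hn).of_le (aux_le_top _))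
          ((t2.contDiffAt hn).of_le (aux_le_top _))]
      rw [l1, l2, l3, l4, e0'', e0' x hx, e0 x hx, e1', e1 x hx]
      simp only [gA]
      push_cast
      generalize gA c n x = G
      field_simp
      ring

theorem gA_closed {c : ℝ} (hc : 2 ≤ c) (n : ℕ) {x : ℝ} (hx : c < x) :
    gA c n x = ((2 * n).factorial : ℝ) * (x - c) ^ n /
          ((n.factorial : ℝ) * (x ^ 2 - 4) ^ ((n : ℝ) + 1 / 2)) := by
  have hR : 0 < x ^ 2 - 4 := by nlinarith
  rw [Real.rpow_add hR, Real.rpow_natCast, ← Real.sqrt_eq_rpow]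
  have hs := (Real.sqrt_pos.2 hR).ne'
  have hR' := hR.ne'
  induction n with
  | zero => simp [gA]
  | succ n ih =>
    have hf : (n.factorial : ℝ) ≠ 0 := by positivity
    simp only [gA, ih]
    rw [show 2 * (n + 1) = 2 * n + 1 + 1 by ring, Nat.factorial_succ, Nat.factorial_succ,
      Nat.factorial_succ]
    push_cast
    have : (n : ℝ) + 1 ≠ 0 := by positivity
    field_simp
    ring

theorem fA_closed {c x A B : ℝ} (h1 : A + B = c * x - 4) (h2 : A * B = (x - c) ^ 2) (n : ℕ) :
    fA c n x = (A ^ n + B ^ n) / 2 * (Real.sqrt (x ^ 2 - 4))⁻¹ := by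
  induction n using Nat.strong_induction_on with
  | _ n ih =>
    match n, ih with
    | 0, _ => simp [fA]
    | 1, _ =>
      simp only [fA, pow_one, h1]; ring
    | n + 2, ih =>
      simp only [fA]
      rw [ih (n + 1) (by omega), ih n (by omega)]
      have e1 : c * x + (-4) = A + B := by linarith
      have e2 : ∀ y, (1 * x + (-c)) * ((1 * x + (-c)) * y) = A * B * y := by
        intro y; rw [h2]; ring
      rw [e1, e2]; ring

theorem Pk_sum (k : ℕ) {x : ℝ} (hx : x ≠ 0) :
    Pk k x + Pkhat k x⁻¹ = (2 - x - x⁻¹) ^ k := by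
  have hb := add_pow (-x) 1 (2 * k)
  simp only [one_pow, mul_one] at hb
  rw [show 2 * k + 1 = k + (k + 1) by ring, Finset.sum_range_add] at hb
  have e1 : ∑ i ∈ Finset.range (k + 1), (-x) ^ (k + i) * ((2 * k).choose (k + i) : ℝ)
      = (-x) ^ k * Pk k x := by
    unfold Pk
    rw [Finset.mul_sum]
    refine Finset.sum_congr rfl fun i _ => ?_
    rw [add_comm i k, pow_add]; ring
  have e2 : ∑ i ∈ Finset.range k, (-x) ^ i * ((2 * k).choose i : ℝ)
      = (-x) ^ k * Pkhat k x⁻¹ := by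
    unfold Pkhat Pk
    rw [Finset.sum_range_succ']
    simp only [pow_zero, zero_add, mul_one, add_sub_cancel_right]
    rw [Finset.mul_sum, ← Finset.sum_range_reflect]
    refine Finset.sum_congr rfl fun i hi => ?_
    have hi := Finset.mem_range.1 hi
    obtain ⟨j, rfl⟩ := Nat.exists_eq_add_of_lt hi
    have : (2 * (i + j + 1)).choose (i + j + 1 - 1 - i) =
        (2 * (i + j + 1)).choose (i + 1 + (i + j + 1)) := by
      apply Nat.choose_symm_of_eq_add; omega
    rw [this, show i + j + 1 - 1 - i = j by omega,
      show (-x) ^ (i + j + 1) = (-x) ^ j * (-x) ^ (i + 1) by rw [← pow_add]; congr 1; ring]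
    have : (-x) ^ (i + 1) * (-x⁻¹) ^ (i + 1) = 1 := by
      rw [← mul_pow]; simp [hx]
    linear_combination (-(-x) ^ j * ((2 * (i + j + 1)).choose (i + 1 + (i + j + 1)) : ℝ)) * this
  rw [e1, e2] at hb
  have h3 : (-x + 1) ^ (2 * k) = (-x) ^ k * (2 - x - x⁻¹) ^ k := by
    rw [pow_mul, ← mul_pow]; congr 1; field_simp; ring
  have h4 : (-x) ^ k ≠ 0 := pow_ne_zero _ (neg_ne_zero.2 hx)
  apply mul_left_cancel₀ h4
  rw [← h3, hb]; ring

theorem sPoly (n : ℕ) : ∃ p ∈ Polynomial.degreeLT ℝ n, ∀ v : ℝ, v ≠ 0 →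
    p.eval (v + v⁻¹) * (v - v⁻¹) = v ^ n - (v⁻¹) ^ n := by
  induction n using Nat.strong_induction_on with
  | _ n ih =>
    match n, ih with
    | 0, _ => exact ⟨0, Submodule.zero_mem _, by simp⟩
    | 1, _ => exact ⟨1, by rw [Polynomial.mem_degreeLT]; simp, by simp⟩
    | n + 2, ih =>
      obtain ⟨p, hp, hp'⟩ := ih n (by omega)
      obtain ⟨q, hq, hq'⟩ := ih (n + 1) (by omega)
      refine ⟨q * Polynomial.X - p, ?_, ?_⟩
      · refine Submodule.sub_mem _ ?_ (Polynomial.degreeLT_mono (by omega) hp)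
        rw [Polynomial.mem_degreeLT] at *
        by_cases h : q = 0
        · simp only [h, zero_mul, Polynomial.degree_zero]; exact WithBot.bot_lt_coe _
        · rw [Polynomial.degree_eq_natDegree h] at hq
          rw [Polynomial.degree_mul_X, Polynomial.degree_eq_natDegree h]
          have : q.natDegree < n + 1 := by exact_mod_cast hq
          exact_mod_cast Nat.succ_lt_succ this
      · intro v hv
        have h1 := hp' v hv
        have h2 := hq' v hv
        simp only [Polynomial.eval_sub, Polynomial.eval_mul, Polynomial.eval_X]
        have h3 : v * v⁻¹ = 1 := mul_inv_cancel₀ hv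
        generalize v⁻¹ = z at *
        linear_combination (v + z) * h2 - h1 + (v ^ n - z ^ n) * h3

theorem iter_poly (p : Polynomial ℝ) (n : ℕ) :
    iteratedDeriv n (fun x => p.eval x) = fun x => (Polynomial.derivative^[n] p).eval x := by
  induction n with
  | zero => simp
  | succ n ih =>
    rw [iteratedDeriv_succ, ih, Function.iterate_succ_apply']
    funext x; simp

theorem delta_decomp (k : ℕ) {u : ℝ} (hu : 0 < u) : ∃ p ∈ Polynomial.degreeLT ℝ k,
    ∀ w, u + u⁻¹ < w → DeltaKU k u w = (-1) ^ k * fA (u + u⁻¹) k w + p.eval w := by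
  choose s hs hs' using sPoly
  refine ⟨∑ n ∈ Finset.range (k + 1),
    Polynomial.C (-(1 / 2) * ((2 * k).choose (n + k) : ℝ) * (-1) ^ n * (u ^ n + u⁻¹ ^ n)) * s n,
    ?_, ?_⟩
  · refine Submodule.sum_mem _ fun n hn => ?_
    rw [← Polynomial.smul_eq_C_mul]
    exact Submodule.smul_mem _ _ (Polynomial.degreeLT_mono
      (by have := Finset.mem_range.1 hn; omega) (hs n))
  · intro w hw
    have hi : 0 < u⁻¹ := inv_pos.2 hu
    have huu : u * u⁻¹ = 1 := mul_inv_cancel₀ hu.ne'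
    have hc : 2 ≤ u + u⁻¹ := by nlinarith [sq_nonneg (u - u⁻¹), sq_nonneg (u + u⁻¹ - 2)]
    have hR : 0 < w ^ 2 - 4 := by nlinarith
    have hr : 0 < Real.sqrt (w ^ 2 - 4) := Real.sqrt_pos.2 hR
    have hr2 := Real.sq_sqrt hR.le
    have hvdef : vOf w = (w + Real.sqrt (w ^ 2 - 4)) / 2 := rfl
    have hv1 : 1 < vOf w := by rw [hvdef]; linarith
    have hvi : (vOf w)⁻¹ = (w - Real.sqrt (w ^ 2 - 4)) / 2 := by
      apply inv_eq_of_mul_eq_one_right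
      rw [hvdef]; nlinarith
    have hsum : vOf w + (vOf w)⁻¹ = w := by rw [hvi, hvdef]; ring
    have hdiff : vOf w - (vOf w)⁻¹ = Real.sqrt (w ^ 2 - 4) := by rw [hvi, hvdef]; ring
    unfold DeltaKU
    generalize vOf w = v at *
    clear hvdef hvi
    have hv : 0 < v := by linarith
    have hvv : v * v⁻¹ = 1 := mul_inv_cancel₀ hv.ne'
    have hkey : 0 < (v - u) * (v - u⁻¹) := by
      have : (v - u) * (v - u⁻¹) = v * (w - u - u⁻¹) := by
        rw [← hsum]; linear_combination huu - hvv
      rw [this]; apply mul_pos hv; linarith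
    have hvu : u < v ∧ u⁻¹ < v := by
      rcases pos_and_pos_or_neg_and_neg_of_mul_pos hkey with h | h
      · constructor <;> linarith [h.1, h.2]
      · exfalso; nlinarith [h.1, h.2]
    have hx1 : 1 ≤ u * v := by
      have := mul_lt_mul_of_pos_left hvu.2 hu
      linarith
    have hy1 : ¬ (1 ≤ u / v) := by
      rw [not_le, div_lt_one hv]; exact hvu.1
    rw [fA_closed (A := u * v + u⁻¹ * v⁻¹ - 2) (B := u * v⁻¹ + u⁻¹ * v - 2)
      (by rw [← hsum]; ring)
      (by
        rw [← hsum]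
        generalize v⁻¹ = z at *
        generalize u⁻¹ = t at *
        linear_combination (v ^ 2 + z ^ 2 - 2) * huu + (u ^ 2 + t ^ 2 - 2) * hvv)]
    rw [← hdiff]
    unfold psiK
    rw [if_pos hx1, if_neg hy1]
    have hd : v - v⁻¹ ≠ 0 := by rw [hdiff]; exact hr.ne'
    have E1 := Pk_sum k (x := (u * v)⁻¹) (by positivity)
    have E2 := Pk_sum k (x := (u / v)⁻¹) (by positivity)
    rw [inv_inv] at E1 E2
    have P : (Polynomial.eval w (∑ n ∈ Finset.range (k + 1),
        Polynomial.C (-(1 / 2) * ((2 * k).choose (n + k) : ℝ) * (-1) ^ n * (u ^ n + u⁻¹ ^ n))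
          * s n)) * (v - v⁻¹) = (1 / 2) * (Pk k (u * v)⁻¹ - Pk k (u * v) + Pk k (u / v)
            - Pk k (u / v)⁻¹) := by
      unfold Pk
      rw [← Finset.sum_sub_distrib, ← Finset.sum_add_distrib, ← Finset.sum_sub_distrib,
        Polynomial.eval_finsetSum, Finset.sum_mul, Finset.mul_sum]
      refine Finset.sum_congr rfl fun n _ => ?_
      have := hs' n v hv.ne'
      rw [hsum] at this
      rw [Polynomial.eval_mul, Polynomial.eval_C, mul_assoc, this, mul_inv, inv_div, div_eq_mul_inv u v,
        div_eq_mul_inv v u]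
      rw [neg_pow (u⁻¹ * v⁻¹), neg_pow (u * v), neg_pow (u * v⁻¹), neg_pow (v * u⁻¹)]
      simp only [mul_pow]
      ring
    have Q1 : (-1) ^ k * (u * v + u⁻¹ * v⁻¹ - 2) ^ k = (2 - (u * v)⁻¹ - u * v) ^ k := by
      rw [← mul_pow, mul_inv]; congr 1; ring
    have Q2 : (-1) ^ k * (u * v⁻¹ + u⁻¹ * v - 2) ^ k = (2 - (u / v)⁻¹ - u / v) ^ k := by
      rw [← mul_pow, inv_div, div_eq_mul_inv u v, div_eq_mul_inv v u]; congr 1; ring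
    rw [div_eq_iff hd, add_mul, P]
    rw [show (-1 : ℝ) ^ k * (((u * v + u⁻¹ * v⁻¹ - 2) ^ k + (u * v⁻¹ + u⁻¹ * v - 2) ^ k) / 2
      * (v - v⁻¹)⁻¹) * (v - v⁻¹) = ((-1) ^ k * (u * v + u⁻¹ * v⁻¹ - 2) ^ k +
        (-1) ^ k * (u * v⁻¹ + u⁻¹ * v - 2) ^ k) / 2 by
        generalize (u * v + u⁻¹ * v⁻¹ - 2) ^ k = a
        generalize (u * v⁻¹ + u⁻¹ * v - 2) ^ k = b
        generalize v - v⁻¹ = d at hd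
        field_simp, Q1, Q2, ← E1, ← E2]
    unfold Pkhat
    ring

/-- Lemma 5: for `k ≥ 1`, `u > 0`, `u ≠ 1`, and every `w > u + u⁻¹`,
`Δ_{k,u}^{(k)}(w) = (-1)^k (2k)! (w - u - u⁻¹)^k / (k! (w² - 4)^{k+1/2})`. -/
theorem deltaKU_kth_derivative (k : ℕ) (hk : 1 ≤ k) (u : ℝ) (hu : 0 < u) (hu1 : u ≠ 1)
    (w : ℝ) (hw : u + u⁻¹ < w) :
    iteratedDeriv k (DeltaKU k u) w
      = (-1 : ℝ) ^ k * ((2 * k).factorial : ℝ) * (w - u - u⁻¹) ^ k /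
          ((k.factorial : ℝ) * (w ^ 2 - 4) ^ ((k : ℝ) + 1 / 2)) := by
  have hi : 0 < u⁻¹ := inv_pos.2 hu
  have huu : u * u⁻¹ = 1 := mul_inv_cancel₀ hu.ne'
  have hc : 2 ≤ u + u⁻¹ := by nlinarith [sq_nonneg (u - u⁻¹), sq_nonneg (u + u⁻¹ - 2)]
  obtain ⟨p, hp, hd⟩ := delta_decomp k hu
  have hev : DeltaKU k u =ᶠ[nhds w]
      (fun x => (-1) ^ k * fA (u + u⁻¹) k x) + fun x => p.eval x := by
    filter_upwards [isOpen_Ioi.mem_nhds (show w ∈ Ioi (u + u⁻¹) from hw)] with x hx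
    exact hd x hx
  have hf : ContDiffAt ℝ k (fA (u + u⁻¹) k) w :=
    ((fA_smooth hc k).contDiffAt (isOpen_Ioi.mem_nhds hw)).of_le (aux_le_top _)
  rw [hev.iteratedDeriv_eq, iteratedDeriv_add (contDiffAt_const.mul hf)
    (by simpa using (p.contDiff_aeval (𝕜 := ℝ) (k : WithTop ℕ∞)).contDiffAt), iteratedDeriv_const_mul _ hf, fA_main hc k w hw, iter_poly,
    Polynomial.iterate_derivative_eq_zero_of_degree_lt (Polynomial.mem_degreeLT.1 hp),
    gA_closed hc k hw]
  simp only [Polynomial.eval_zero, add_zero, sub_add_eq_sub_sub]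
  ring
end
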